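/- Every commutative Artinian ring with identity is a generalized Euclidean ring: SL_n(R) = E_n(R) for all n ≥ 2. -/

import Mathlib

/-!
A commutative ring with finitely many maximal ideals has stable rank one: given a coprime pair
`(a, b)`, choose by the Chinese remainder theorem `t ≡ 1` modulo the maximal ideals that contain `a`
and `t ≡ 0` modulo the others; then `a + t * b` lies in no maximal ideal.

Over a ring of stable rank one, let `A` have determinant one and size at least two. Its last column
is unimodular by the adjugate identity, so adding multiples of the other rows to the last row makes
the corner entry a unit. Two more row operations turn this unit into `1`: the first uses it to put a
prescribed entry above the corner, the second adds a multiple of that entry to the corner. The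
Schur complement of a corner `1` has determinant one, and induction on the size applies to it.
-/

/-- The set of `n × n` elementary matrices over `R`: matrices differing from the
identity by a single off-diagonal entry. -/
def ElemMatrices (n : ℕ) (R : Type*) [CommRing R] : Set (Matrix (Fin n) (Fin n) R) :=
  {M | ∃ (i j : Fin n) (c : R), i ≠ j ∧ M = Matrix.transvection i j c}

/-- `R` is a `GE_n`-ring: every matrix of determinant one is a product of
elementary matrices, i.e. `SL_n(R) = E_n(R)`. -/
def IsGE (R : Type*) [CommRing R] (n : ℕ) : Prop :=
  ∀ A : Matrix (Fin n) (Fin n) R, A.det = 1 → A ∈ Submonoid.closure (ElemMatrices n R)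

/-- `R` is a generalized Euclidean ring: a `GE_n`-ring for every `n ≥ 2`. -/
def IsGERing (R : Type*) [CommRing R] : Prop := ∀ n, 2 ≤ n → IsGE R n

open Matrix

/-- A commutative ring has stable rank one if every coprime pair `(a, b)` can be shortened to a unit
`a + t * b`. -/
class HasStableRankOne (R : Type*) [CommRing R] : Prop where
  exists_isUnit_add_mul {a b : R} : IsCoprime a b → ∃ t, IsUnit (a + t * b)

instance HasStableRankOne.of_finite_maximalSpectrum (R : Type*) [CommRing R]
    [Finite (MaximalSpectrum R)] : HasStableRankOne R where
  exists_isUnit_add_mul {a b} hab := by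
    classical
    obtain ⟨t, ht⟩ := Ideal.exists_forall_sub_mem_ideal
      (I := fun m : MaximalSpectrum R => m.asIdeal)
      (fun m n hmn => Ideal.isCoprime_of_isMaximal (mt MaximalSpectrum.ext hmn))
      (fun m => if a ∈ m.asIdeal then 1 else 0)
    refine ⟨t, by_contra fun hunit => ?_⟩
    obtain ⟨m, hm, hmem⟩ := exists_max_ideal_of_mem_nonunits hunit
    have htm : t - (if a ∈ m then 1 else 0) ∈ m := ht ⟨m, hm⟩
    split_ifs at htm with ha
    · have htb : t * b ∈ m := (m.add_mem_iff_right ha).mp hmem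
      have hb : b ∈ m := by
        have : b = t * b - (t - 1) * b := by ring
        exact this ▸ m.sub_mem htb (m.mul_mem_right b htm)
      obtain ⟨x, y, hxy⟩ := hab
      exact hm.ne_top <| m.eq_top_of_isUnit_mem
        (hxy ▸ m.add_mem (m.mul_mem_left x ha) (m.mul_mem_left y hb)) isUnit_one
    · rw [sub_zero] at htm
      exact ha ((m.add_mem_iff_left (m.mul_mem_right b htm)).mp hmem)

/-- The elementary group `E_ι(R)` over an arbitrary finite index type, as a submonoid of the matrix
ring; arbitrary index types make block decompositions available. -/
def elementarySubmonoid (ι R : Type*) [Fintype ι] [DecidableEq ι] [CommRing R] :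
    Submonoid (Matrix ι ι R) :=
  Submonoid.closure (Set.range TransvectionStruct.toMatrix)

lemma closure_elemMatrices (n : ℕ) (R : Type*) [CommRing R] :
    Submonoid.closure (ElemMatrices n R) = elementarySubmonoid (Fin n) R := by
  refine congrArg Submonoid.closure (Set.ext fun M => ⟨?_, ?_⟩)
  · rintro ⟨i, j, c, hij, rfl⟩
    exact ⟨⟨i, j, hij, c⟩, rfl⟩
  · rintro ⟨⟨i, j, hij, c⟩, rfl⟩
    exact ⟨i, j, c, hij, rfl⟩

namespace elementarySubmonoid

variable {R ι κ : Type*} [CommRing R] [Fintype ι] [DecidableEq ι] [Fintype κ] [DecidableEq κ]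

lemma transvectionStruct_mem (t : TransvectionStruct ι R) :
    t.toMatrix ∈ elementarySubmonoid ι R :=
  Submonoid.subset_closure ⟨t, rfl⟩

lemma map_reindexAlgEquiv_le (e : ι ≃ κ) :
    (elementarySubmonoid ι R).map (reindexAlgEquiv R R e) ≤ elementarySubmonoid κ R := by
  rw [Submonoid.map_le_iff_le_comap, elementarySubmonoid, Submonoid.closure_le]
  rintro _ ⟨t, rfl⟩
  exact Submonoid.mem_comap.mpr (t.toMatrix_reindexEquiv e ▸ transvectionStruct_mem _)

lemma reindex_mem_iff (e : ι ≃ κ) {A : Matrix ι ι R} :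
    reindexAlgEquiv R R e A ∈ elementarySubmonoid κ R ↔ A ∈ elementarySubmonoid ι R := by
  refine ⟨fun h => ?_, fun h => map_reindexAlgEquiv_le e ⟨A, h, rfl⟩⟩
  simpa using map_reindexAlgEquiv_le e.symm ⟨_, h, rfl⟩

lemma det_eq_one {A : Matrix ι ι R} (hA : A ∈ elementarySubmonoid ι R) : A.det = 1 := by
  have hle : elementarySubmonoid ι R ≤ MonoidHom.mker (detMonoidHom (n := ι) (R := R)) := by
    rw [elementarySubmonoid, Submonoid.closure_le]
    rintro _ ⟨t, rfl⟩
    exact t.det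
  exact hle hA

lemma exists_mul_eq_one {A : Matrix ι ι R} (hA : A ∈ elementarySubmonoid ι R) :
    ∃ B ∈ elementarySubmonoid ι R, B * A = 1 := by
  induction hA using Submonoid.closure_induction with
  | mem _ hM =>
    obtain ⟨t, rfl⟩ := hM
    exact ⟨_, transvectionStruct_mem t.inv, t.inv_mul⟩
  | one => exact ⟨1, one_mem _, one_mul 1⟩
  | mul A₁ A₂ _ _ ih₁ ih₂ =>
    obtain ⟨B₁, hB₁, h₁⟩ := ih₁
    obtain ⟨B₂, hB₂, h₂⟩ := ih₂
    refine ⟨B₂ * B₁, mul_mem hB₂ hB₁, ?_⟩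
    rw [mul_assoc, ← mul_assoc B₁, h₁, one_mul, h₂]

lemma mem_of_mul_mem {E A : Matrix ι ι R} (hE : E ∈ elementarySubmonoid ι R)
    (h : E * A ∈ elementarySubmonoid ι R) : A ∈ elementarySubmonoid ι R := by
  obtain ⟨F, hF, hFE⟩ := exists_mul_eq_one hE
  simpa only [← mul_assoc, hFE, one_mul] using mul_mem hF h

lemma fromBlocks_diagonal_mem {A : Matrix ι ι R} (hA : A ∈ elementarySubmonoid ι R) :
    fromBlocks A 0 0 (1 : Matrix κ κ R) ∈ elementarySubmonoid (ι ⊕ κ) R := by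
  induction hA using Submonoid.closure_induction with
  | mem _ hM =>
    obtain ⟨t, rfl⟩ := hM
    exact t.toMatrix_sumInl κ ▸ transvectionStruct_mem _
  | one => rw [fromBlocks_one]; exact one_mem _
  | mul A₁ A₂ _ _ ih₁ ih₂ => simpa [fromBlocks_multiply] using mul_mem ih₁ ih₂

lemma fromBlocks_upper_mem (B : Matrix ι κ R) :
    fromBlocks 1 B 0 1 ∈ elementarySubmonoid (ι ⊕ κ) R := by
  induction B using Matrix.induction_on' with
  | h_zero => rw [fromBlocks_one]; exact one_mem _
  | h_add B₁ B₂ ih₁ ih₂ => simpa [fromBlocks_multiply, add_comm] using mul_mem ih₁ ih₂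
  | h_std_basis i j c =>
    have hsingle : fromBlocks 1 (single i j c) 0 1 =
        transvection (Sum.inl i) (Sum.inr j) c := by
      ext (a | a) (b | b) <;> simp [transvection, one_apply, single_apply]
    exact hsingle ▸ transvectionStruct_mem ⟨Sum.inl i, Sum.inr j, Sum.inl_ne_inr, c⟩

lemma fromBlocks_lower_mem (C : Matrix κ ι R) :
    fromBlocks 1 0 C 1 ∈ elementarySubmonoid (ι ⊕ κ) R := by
  rw [← reindex_mem_iff (Equiv.sumComm ι κ)]
  simpa [fromBlocks_submatrix_sum_swap_sum_swap] using fromBlocks_upper_mem C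

lemma fromBlocks_mem_of_sub_mul_mem {A : Matrix ι ι R} {B : Matrix ι κ R} {C : Matrix κ ι R}
    (h : A - B * C ∈ elementarySubmonoid ι R) :
    fromBlocks A B C 1 ∈ elementarySubmonoid (ι ⊕ κ) R := by
  let _ : Invertible (1 : Matrix κ κ R) := invertibleOne
  rw [fromBlocks_eq_of_invertible₂₂]
  exact mul_mem (mul_mem (fromBlocks_upper_mem _) (fromBlocks_diagonal_mem (by simpa using h)))
    (fromBlocks_lower_mem _)

lemma exists_mulVec_inr_eq_one_of_isUnit [Nonempty ι] {v : ι ⊕ Unit → R}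
    (hv : IsUnit (v (Sum.inr ()))) :
    ∃ E ∈ elementarySubmonoid (ι ⊕ Unit) R, (E *ᵥ v) (Sum.inr ()) = 1 := by
  obtain ⟨s, hs⟩ := hv.exists_left_inv
  obtain ⟨k⟩ := ‹Nonempty ι›
  set u := v (Sum.inr ())
  let E₁ : Matrix (ι ⊕ Unit) (ι ⊕ Unit) R :=
    fromBlocks 1 (single k () ((1 - v (Sum.inl k)) * s)) 0 1
  let E₂ : Matrix (ι ⊕ Unit) (ι ⊕ Unit) R := fromBlocks 1 0 (single () k (1 - u)) 1
  have hcorner : (E₁ *ᵥ v) (Sum.inr ()) = u := by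
    simp [E₁, u, fromBlocks_mulVec]
  have hk : (E₁ *ᵥ v) (Sum.inl k) = 1 := by
    have : (E₁ *ᵥ v) (Sum.inl k) = v (Sum.inl k) + (1 - v (Sum.inl k)) * s * u := by
      simp [E₁, u, fromBlocks_mulVec, single_mulVec]
    linear_combination this + (1 - v (Sum.inl k)) * hs
  refine ⟨E₂ * E₁, mul_mem (fromBlocks_lower_mem _) (fromBlocks_upper_mem _), ?_⟩
  calc ((E₂ * E₁) *ᵥ v) (Sum.inr ())
    _ = (1 - u) * (E₁ *ᵥ v) (Sum.inl k) + (E₁ *ᵥ v) (Sum.inr ()) := by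
      rw [← mulVec_mulVec]
      simp [E₂, fromBlocks_mulVec, single_mulVec, -mulVec_mulVec]
    _ = 1 := by rw [hk, hcorner]; ring

lemma exists_isUnit_mulVec_inr [HasStableRankOne R] {v w : ι ⊕ Unit → R} (hwv : w ⬝ᵥ v = 1) :
    ∃ E ∈ elementarySubmonoid (ι ⊕ Unit) R, IsUnit ((E *ᵥ v) (Sum.inr ())) := by
  have hcoprime : IsCoprime (v (Sum.inr ())) ((w ∘ Sum.inl) ⬝ᵥ (v ∘ Sum.inl)) :=
    ⟨w (Sum.inr ()), 1, by simpa [dotProduct, add_comm] using hwv⟩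
  obtain ⟨t, ht⟩ := HasStableRankOne.exists_isUnit_add_mul hcoprime
  refine ⟨_, fromBlocks_lower_mem (replicateRow Unit (t • w ∘ Sum.inl)), ?_⟩
  simpa [fromBlocks_mulVec, smul_mulVec, replicateRow_mulVec_eq_const, add_comm] using ht

lemma exists_mulVec_inr_eq_one [HasStableRankOne R] [Nonempty ι] {v w : ι ⊕ Unit → R}
    (hwv : w ⬝ᵥ v = 1) :
    ∃ E ∈ elementarySubmonoid (ι ⊕ Unit) R, (E *ᵥ v) (Sum.inr ()) = 1 := by
  obtain ⟨E₁, hE₁, hunit⟩ := exists_isUnit_mulVec_inr hwv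
  obtain ⟨E₂, hE₂, hone⟩ := exists_mulVec_inr_eq_one_of_isUnit hunit
  exact ⟨E₂ * E₁, mul_mem hE₂ hE₁, by rwa [← mulVec_mulVec]⟩

lemma mem_of_corner_eq_one (ih : ∀ B : Matrix ι ι R, B.det = 1 → B ∈ elementarySubmonoid ι R)
    {A : Matrix (ι ⊕ Unit) (ι ⊕ Unit) R} (hA : A.det = 1)
    (hcorner : A (Sum.inr ()) (Sum.inr ()) = 1) : A ∈ elementarySubmonoid (ι ⊕ Unit) R := by
  have hblocks : fromBlocks A.toBlocks₁₁ A.toBlocks₁₂ A.toBlocks₂₁ 1 = A := by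
    have h₂₂ : A.toBlocks₂₂ = 1 := by ext; simpa [toBlocks₂₂] using hcorner
    rw [← h₂₂, fromBlocks_toBlocks]
  rw [← hblocks] at hA ⊢
  rw [det_fromBlocks_one₂₂] at hA
  exact fromBlocks_mem_of_sub_mul_mem (ih _ hA)

lemma mem_sum_unit_of_det_eq_one [HasStableRankOne R] [Nonempty ι]
    (ih : ∀ B : Matrix ι ι R, B.det = 1 → B ∈ elementarySubmonoid ι R)
    {A : Matrix (ι ⊕ Unit) (ι ⊕ Unit) R} (hA : A.det = 1) :
    A ∈ elementarySubmonoid (ι ⊕ Unit) R := by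
  have hunimodular : A.adjugate (Sum.inr ()) ⬝ᵥ A.col (Sum.inr ()) = 1 := by
    change (A.adjugate * A) (Sum.inr ()) (Sum.inr ()) = 1
    rw [adjugate_mul, hA, one_smul, one_apply_eq]
  obtain ⟨E, hE, hcorner⟩ := exists_mulVec_inr_eq_one hunimodular
  refine mem_of_mul_mem hE (mem_of_corner_eq_one ih ?_ hcorner)
  rw [det_mul, det_eq_one hE, hA, one_mul]

end elementarySubmonoid

lemma isGE_one (R : Type*) [CommRing R] : IsGE R 1 := by
  intro A hA
  have hone : A = 1 := by
    ext i j
    rw [Subsingleton.elim i 0, Subsingleton.elim j 0, ← det_fin_one A, hA, one_apply_eq]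
  exact hone ▸ one_mem _

lemma IsGE.succ {R : Type*} [CommRing R] [HasStableRankOne R] {n : ℕ} (hn : 1 ≤ n)
    (h : IsGE R n) : IsGE R (n + 1) := by
  intro A hA
  have : NeZero n := ⟨Nat.one_le_iff_ne_zero.mp hn⟩
  rw [IsGE, closure_elemMatrices] at h
  let e : Fin (n + 1) ≃ Fin n ⊕ Unit := Fintype.equivOfCardEq (by simp)
  rw [closure_elemMatrices, ← elementarySubmonoid.reindex_mem_iff e]
  exact elementarySubmonoid.mem_sum_unit_of_det_eq_one h (by rw [det_reindexAlgEquiv, hA])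

theorem stmt_15_general (R : Type*) [CommRing R] [HasStableRankOne R] : IsGERing R := by
  intro n hn
  exact Nat.le_induction (isGE_one R) (fun _ hk ih => ih.succ hk) n (one_le_two.trans hn)

/-- Every commutative Artinian ring is a generalized Euclidean ring. -/
theorem stmt_15 (R : Type*) [CommRing R] [IsArtinianRing R] : IsGERing R :=
  stmt_15_general R
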